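/- Let n ≥ 3 and 1 ≤ m < n−1. In the even hyperoctahedral group D_n, let S = {1, 2, …, n−1, −n}, let W_P = {w ∈ D_n : w(S) = S} and W_Q = {w ∈ D_n : w({1,…,m}) = {1,…,m}}. Then two elements w, w' ∈ D_n lie in the same (W_P, W_Q) double coset if and only if #(w({1,…,m}) ∩ S) = #(w'({1,…,m}) ∩ S); consequently the (W_P, W_Q) double cosets are exactly the m+1 sets E_d = {w ∈ D_n : #(w({1,…,m}) ∩ S) = d} for 0 ≤ d ≤ m. -/

import Mathlib

/-- The set `{−n, …, −1, 1, …, n}` of signed indices. -/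
def SIdx (n : ℕ) : Type := {x : ℤ // x ≠ 0 ∧ x.natAbs ≤ n}

instance (n : ℕ) : Neg (SIdx n) :=
  ⟨fun x => ⟨-x.1, ⟨neg_ne_zero.mpr x.2.1, by simpa using x.2.2⟩⟩⟩

/-- Membership in the hyperoctahedral group `B_n`: a permutation `w` of
`{−n, …, −1, 1, …, n}` satisfying `w(−x) = −w(x)` for all `x`. -/
def IsSignedPerm {n : ℕ} (w : Equiv.Perm (SIdx n)) : Prop :=
  ∀ x : SIdx n, w (-x) = -(w x)

/-- Membership in the even hyperoctahedral group `D_n ⊆ B_n`: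
the number of `j ∈ {1,…,n}` with `w(j) < 0` is even. -/
noncomputable def IsEvenSignedPerm {n : ℕ} (w : Equiv.Perm (SIdx n)) : Prop :=
  IsSignedPerm w ∧ Even (Set.ncard {x : SIdx n | 0 < x.1 ∧ (w x).1 < 0})

/-- The set `S = {1, 2, …, n−1, −n}`. -/
def IndexSetS (n : ℕ) : Set (SIdx n) :=
  {x : SIdx n | (0 < x.1 ∧ x.1 < (n : ℤ)) ∨ x.1 = -(n : ℤ)}

/-- `W_P = {w ∈ D_n : w(S) = S}`. -/
noncomputable def InWP {n : ℕ} (h : Equiv.Perm (SIdx n)) : Prop :=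
  IsEvenSignedPerm h ∧ ⇑h '' IndexSetS n = IndexSetS n

/-- `W_Q = {w ∈ D_n : w({1,…,m}) = {1,…,m}}`. -/
noncomputable def InWQ {n : ℕ} (m : ℕ) (k : Equiv.Perm (SIdx n)) : Prop :=
  IsEvenSignedPerm k ∧
    ⇑k '' {x : SIdx n | 0 < x.1 ∧ x.1 ≤ (m : ℤ)} = {x : SIdx n | 0 < x.1 ∧ x.1 ≤ (m : ℤ)}

/-- `w` and `w'` lie in the same `(W_P, W_Q)` double coset. -/
noncomputable def SameDC {n : ℕ} (m : ℕ) (w w' : Equiv.Perm (SIdx n)) : Prop :=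
  ∃ h k : Equiv.Perm (SIdx n), InWP h ∧ InWQ m k ∧ w' = h * w * k

/-- `#(w({1,…,m}) ∩ S)`. -/
noncomputable def interCount {n : ℕ} (m : ℕ) (w : Equiv.Perm (SIdx n)) : ℕ :=
  Set.ncard ((⇑w '' {x : SIdx n | 0 < x.1 ∧ x.1 ≤ (m : ℤ)}) ∩ IndexSetS n)

open Classical in
noncomputable instance sidxFintype (n : ℕ) : Fintype (SIdx n) := by
  have : Finite (SIdx n) := by
    have h : Set.Finite {x : ℤ | x ≠ 0 ∧ x.natAbs ≤ n} := by
      apply (Set.finite_Icc (-(n : ℤ)) n).subset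
      rintro x ⟨_, hx⟩
      simp only [Set.mem_Icc]; omega
    exact h.to_subtype
  exact Fintype.ofFinite _

theorem sidx_ext {n : ℕ} {x y : SIdx n} (h : x.1 = y.1) : x = y := Subtype.ext h

theorem sidx_neg_val {n : ℕ} (x : SIdx n) : (-x).1 = -x.1 := rfl

theorem sidx_neg_neg {n : ℕ} (x : SIdx n) : - -x = x := sidx_ext (by simp [sidx_neg_val])

theorem sidx_prop {n : ℕ} (x : SIdx n) : x.1 ≠ 0 ∧ x.1.natAbs ≤ n := x.2

theorem sidx_neg_ne {n : ℕ} (x : SIdx n) : -x ≠ x := by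
  intro h
  have h1 := congrArg Subtype.val h
  rw [sidx_neg_val] at h1
  have := (sidx_prop x).1
  omega

theorem neg_mem_S {n : ℕ} (x : SIdx n) : -x ∈ IndexSetS n ↔ x ∉ IndexSetS n := by
  have h := sidx_prop x
  simp only [IndexSetS, Set.mem_ofPred_eq, sidx_neg_val]
  omega

/-- sign -/
noncomputable def sg {n : ℕ} (x : SIdx n) : ℤ := if x.1 < 0 then -1 else 1

/-- absolute value -/
noncomputable def ab {n : ℕ} (x : SIdx n) : SIdx n := if x.1 < 0 then -x else x

open Classical in
/-- parity character -/
noncomputable def PP {n : ℕ} (w : Equiv.Perm (SIdx n)) : ℤ :=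
  ∏ x ∈ Finset.univ.filter (fun x : SIdx n => 0 < x.1), sg (w x)

theorem ab_pos {n : ℕ} (x : SIdx n) : 0 < (ab x).1 := by
  have h := sidx_prop x
  unfold ab
  split_ifs with h1
  · rw [sidx_neg_val]; omega
  · omega

theorem ab_of_pos {n : ℕ} {x : SIdx n} (h : 0 < x.1) : ab x = x := by
  unfold ab; rw [if_neg (by omega)]

theorem ab_neg {n : ℕ} (x : SIdx n) : ab (-x) = ab x := by
  have h := sidx_prop x
  unfold ab
  rw [sidx_neg_val, sidx_neg_neg]
  split_ifs with h1 h2 h2 <;> first | rfl | omega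

theorem sg_neg {n : ℕ} (x : SIdx n) : sg (-x) = - sg x := by
  have h := sidx_prop x
  unfold sg
  rw [sidx_neg_val]
  split_ifs with h1 h2 h2 <;> first | rfl | omega

theorem ab_or {n : ℕ} (x : SIdx n) : (x.1 < 0 ∧ ab x = -x) ∨ (0 < x.1 ∧ ab x = x) := by
  have h := sidx_prop x
  unfold ab
  split_ifs with h1
  · exact Or.inl ⟨h1, rfl⟩
  · exact Or.inr ⟨by omega, rfl⟩

theorem sg_mul {n : ℕ} {w : Equiv.Perm (SIdx n)} (hw : IsSignedPerm w) (y : SIdx n) :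
    sg (w y) = sg y * sg (w (ab y)) := by
  rcases ab_or y with ⟨h, e⟩ | ⟨h, e⟩
  · rw [e, hw, sg_neg]
    have : sg y = -1 := by simp [sg, h]
    rw [this]; ring
  · rw [e]
    have : sg y = 1 := by unfold sg; rw [if_neg (by omega)]
    rw [this]; ring

theorem ab_w_ab {n : ℕ} {w : Equiv.Perm (SIdx n)} (hw : IsSignedPerm w) (y : SIdx n) :
    ab (w (ab y)) = ab (w y) := by
  rcases ab_or y with ⟨h, e⟩ | ⟨h, e⟩
  · rw [e, hw, ab_neg]
  · rw [e]

theorem signed_mul {n : ℕ} {w k : Equiv.Perm (SIdx n)} (hw : IsSignedPerm w)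
    (hk : IsSignedPerm k) : IsSignedPerm (w * k) := by
  intro x
  simp only [Equiv.Perm.mul_apply]
  rw [hk, hw]

theorem signed_inv {n : ℕ} {w : Equiv.Perm (SIdx n)} (hw : IsSignedPerm w) :
    IsSignedPerm w⁻¹ := by
  intro x
  apply w.injective
  rw [hw]
  simp

theorem PP_mul {n : ℕ} {w k : Equiv.Perm (SIdx n)} (hw : IsSignedPerm w)
    (hk : IsSignedPerm k) : PP (w * k) = PP w * PP k := by
  classical
  unfold PP
  rw [mul_comm (Finset.prod _ _)]
  have h1 : ∀ x ∈ Finset.univ.filter (fun x : SIdx n => 0 < x.1),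
      sg ((w * k) x) = sg (k x) * sg (w (ab (k x))) := by
    intro x _
    exact sg_mul hw (k x)
  rw [Finset.prod_congr rfl h1, Finset.prod_mul_distrib]
  congr 1
  apply Finset.prod_nbij' (fun x => ab (k x)) (fun x => ab (k⁻¹ x))
  · intro x _; simp [ab_pos]
  · intro x _; simp [ab_pos]
  · intro x hx
    have hx : 0 < x.1 := by simpa using hx
    rw [ab_w_ab (signed_inv hk)]; simp [ab_of_pos hx]
  · intro x hx
    have hx : 0 < x.1 := by simpa using hx
    rw [ab_w_ab hk]; simp [ab_of_pos hx]
  · intro x _; rfl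

theorem PP_eq_pow {n : ℕ} (w : Equiv.Perm (SIdx n)) :
    PP w = (-1) ^ (Set.ncard {x : SIdx n | 0 < x.1 ∧ (w x).1 < 0}) := by
  classical
  unfold PP sg
  rw [Finset.prod_ite]
  simp only [Finset.prod_const, Finset.prod_const_one, mul_one, one_pow]
  congr 1
  rw [Finset.filter_filter, ← Set.ncard_coe_finset]
  congr 1
  ext x; simp

theorem even_iff {n : ℕ} (w : Equiv.Perm (SIdx n)) :
    IsEvenSignedPerm w ↔ IsSignedPerm w ∧ PP w = 1 := by
  unfold IsEvenSignedPerm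
  rw [PP_eq_pow, neg_one_pow_eq_one_iff_even (by norm_num)]

theorem PP_sq {n : ℕ} (w : Equiv.Perm (SIdx n)) : PP w = 1 ∨ PP w = -1 := by
  rw [PP_eq_pow]; exact neg_one_pow_eq_or ℤ _

theorem PP_one {n : ℕ} {w : Equiv.Perm (SIdx n)} (h : ∀ x : SIdx n, 0 < x.1 → 0 < (w x).1) :
    PP w = 1 := by
  unfold PP
  apply Finset.prod_eq_one
  intro x hx
  have hx : 0 < x.1 := by simpa using hx
  have := h x hx
  unfold sg; rw [if_neg (by omega)]

theorem PP_inv {n : ℕ} {w : Equiv.Perm (SIdx n)} (hw : IsSignedPerm w) : PP w⁻¹ = PP w := by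
  have h := PP_mul hw (signed_inv hw)
  rw [mul_inv_cancel, PP_one (w := 1) (by intro x hx; simpa using hx)] at h
  rcases PP_sq w with h1 | h1 <;> rw [h1] at h ⊢ <;> linarith

theorem even_mul {n : ℕ} {w k : Equiv.Perm (SIdx n)} (hw : IsEvenSignedPerm w)
    (hk : IsEvenSignedPerm k) : IsEvenSignedPerm (w * k) := by
  rw [even_iff] at *
  exact ⟨signed_mul hw.1 hk.1, by rw [PP_mul hw.1 hk.1, hw.2, hk.2]; rfl⟩

theorem even_inv {n : ℕ} {w : Equiv.Perm (SIdx n)} (hw : IsEvenSignedPerm w) :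
    IsEvenSignedPerm w⁻¹ := by
  rw [even_iff] at *
  exact ⟨signed_inv hw.1, by rw [PP_inv hw.1, hw.2]⟩

open Classical in
/-- flip the sign of entries with absolute value in F -/
noncomputable def flipFun {n : ℕ} (F : Set ℕ) (x : SIdx n) : SIdx n :=
  if x.1.natAbs ∈ F then -x else x

theorem flipFun_flipFun {n : ℕ} (F : Set ℕ) (x : SIdx n) : flipFun F (flipFun F x) = x := by
  unfold flipFun
  by_cases h : x.1.natAbs ∈ F
  · rw [if_pos h, sidx_neg_val, Int.natAbs_neg, if_pos h, sidx_neg_neg]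
  · rw [if_neg h, if_neg h]

/-- flip as a permutation -/
noncomputable def flipP {n : ℕ} (F : Set ℕ) : Equiv.Perm (SIdx n) :=
  ⟨flipFun F, flipFun F, flipFun_flipFun F, flipFun_flipFun F⟩

theorem flipP_val {n : ℕ} (F : Set ℕ) (x : SIdx n) :
    (x.1.natAbs ∈ F ∧ (flipP F x).1 = -x.1) ∨ (x.1.natAbs ∉ F ∧ (flipP F x).1 = x.1) := by
  change (_ ∧ (flipFun F x).1 = _) ∨ (_ ∧ (flipFun F x).1 = _)
  unfold flipFun
  by_cases h : x.1.natAbs ∈ F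
  · rw [if_pos h]; exact Or.inl ⟨h, rfl⟩
  · rw [if_neg h]; exact Or.inr ⟨h, rfl⟩

theorem flipP_flipP {n : ℕ} (F : Set ℕ) (x : SIdx n) : flipP F (flipP F x) = x :=
  flipFun_flipFun F x

theorem flipP_signed {n : ℕ} (F : Set ℕ) : IsSignedPerm (flipP (n := n) F) := by
  intro x
  apply sidx_ext
  rw [sidx_neg_val]
  have h1 := flipP_val F x
  have h2 := flipP_val F (-x)
  rw [sidx_neg_val, Int.natAbs_neg] at h2
  rcases h1 with h1 | h1 <;> rcases h2 with h2 | h2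
  · omega
  · exact absurd h1.1 h2.1
  · exact absurd h2.1 h1.1
  · omega

theorem flip_n_mem {n : ℕ} (x : SIdx n) : 0 < (flipP {n} x).1 ↔ x ∈ IndexSetS n := by
  have h := sidx_prop x
  have h1 := flipP_val {n} x
  simp only [Set.mem_singleton_iff] at h1
  simp only [IndexSetS, Set.mem_ofPred_eq]
  omega

theorem even_of_S {n : ℕ} {h : Equiv.Perm (SIdx n)} (hs : IsSignedPerm h)
    (hS : ∀ x, x ∈ IndexSetS n → h x ∈ IndexSetS n) : IsEvenSignedPerm h := by
  rw [even_iff]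
  refine ⟨hs, ?_⟩
  have hf := flipP_signed (n := n) {n}
  have h1 : PP (flipP {n} * (h * flipP {n})) = 1 := by
    apply PP_one
    intro x hx
    simp only [Equiv.Perm.mul_apply]
    rw [flip_n_mem]
    apply hS
    rw [← flip_n_mem, flipP_flipP]
    exact hx
  rw [PP_mul hf (signed_mul hs hf), PP_mul hs hf] at h1
  rcases PP_sq (flipP (n := n) {n}) with h2 | h2 <;> rw [h2] at h1 <;> linarith

open Classical in
/-- extension of a permutation of S -/
noncomputable def extFun {n : ℕ} (σ : IndexSetS n ≃ IndexSetS n) (x : SIdx n) : SIdx n :=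
  if h : x ∈ IndexSetS n then (σ ⟨x, h⟩).1 else -(σ ⟨-x, (neg_mem_S x).2 h⟩).1

theorem extFun_pos {n : ℕ} (σ : IndexSetS n ≃ IndexSetS n) (x : IndexSetS n) :
    extFun σ x.1 = (σ x).1 := by
  unfold extFun; rw [dif_pos x.2]

theorem extFun_neg {n : ℕ} (σ : IndexSetS n ≃ IndexSetS n) (x : IndexSetS n) :
    extFun σ (-x.1) = -(σ x).1 := by
  have h : -x.1 ∉ IndexSetS n := by rw [neg_mem_S]; simp
  unfold extFun; rw [dif_neg h]
  simp only [sidx_neg_neg]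

theorem S_cases {n : ℕ} (x : SIdx n) :
    (∃ y : IndexSetS n, x = y.1) ∨ (∃ y : IndexSetS n, x = -y.1) := by
  by_cases h : x ∈ IndexSetS n
  · exact Or.inl ⟨⟨x, h⟩, rfl⟩
  · exact Or.inr ⟨⟨-x, (neg_mem_S x).2 h⟩, (sidx_neg_neg x).symm⟩

/-- extension as a permutation -/
noncomputable def extP {n : ℕ} (σ : IndexSetS n ≃ IndexSetS n) : Equiv.Perm (SIdx n) where
  toFun := extFun σ
  invFun := extFun σ.symm
  left_inv := by
    intro x
    rcases S_cases x with ⟨y, rfl⟩ | ⟨y, rfl⟩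
    · rw [extFun_pos, extFun_pos]; simp
    · rw [extFun_neg, extFun_neg]; simp
  right_inv := by
    intro x
    rcases S_cases x with ⟨y, rfl⟩ | ⟨y, rfl⟩
    · rw [extFun_pos, extFun_pos]; simp
    · rw [extFun_neg, extFun_neg]; simp

theorem extP_pos {n : ℕ} (σ : IndexSetS n ≃ IndexSetS n) (x : IndexSetS n) :
    extP σ x.1 = (σ x).1 := extFun_pos σ x

theorem extP_neg {n : ℕ} (σ : IndexSetS n ≃ IndexSetS n) (x : IndexSetS n) :
    extP σ (-x.1) = -(σ x).1 := extFun_neg σ x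

theorem extP_signed {n : ℕ} (σ : IndexSetS n ≃ IndexSetS n) : IsSignedPerm (extP σ) := by
  intro x
  rcases S_cases x with ⟨y, rfl⟩ | ⟨y, rfl⟩
  · rw [extP_neg, extP_pos]
  · rw [sidx_neg_neg, extP_neg, extP_pos, sidx_neg_neg]

theorem extP_InWP {n : ℕ} (σ : IndexSetS n ≃ IndexSetS n) : InWP (extP σ) := by
  refine ⟨even_of_S (extP_signed σ) ?_, ?_⟩
  · intro x hx
    rw [extP_pos σ ⟨x, hx⟩]; exact (σ _).2
  · ext x
    constructor
    · rintro ⟨y, hy, rfl⟩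
      rw [extP_pos σ ⟨y, hy⟩]; exact (σ _).2
    · intro hx
      exact ⟨(σ.symm ⟨x, hx⟩).1, (σ.symm _).2, by rw [extP_pos]; simp⟩

/-- A coloured bijection exists when the colour classes have the same sizes. -/
theorem exists_equiv_color {α : Type*} [Finite α] (f g : α → Fin 3)
    (h1 : Set.ncard {x | f x = 1} = Set.ncard {x | g x = 1})
    (h2 : Set.ncard {x | f x = 2} = Set.ncard {x | g x = 2}) :
    ∃ σ : α ≃ α, ∀ x, g (σ x) = f x := by
  classical
  have := Fintype.ofFinite α
  have key : ∀ f : α → Fin 3, Set.ncard {x | f x = 0} + Set.ncard {x | f x = 1} +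
      Set.ncard {x | f x = 2} = Fintype.card α := by
    intro f
    have h := Finset.card_eq_sum_card_fiberwise (f := f) (s := Finset.univ) (t := Finset.univ)
      (by intro x _; simp)
    rw [Fin.sum_univ_three, Finset.card_univ] at h
    rw [h]
    simp only [← Set.ncard_coe_finset, Finset.coe_filter, Finset.mem_univ, true_and]
  have hk1 := key f
  have hk2 := key g
  have hall : ∀ i : Fin 3, Nonempty ({x // f x = i} ≃ {x // g x = i}) := by
    intro i
    have hc : Nat.card {x // f x = i} = Nat.card {x // g x = i} := by
      change Set.ncard {x | f x = i} = Set.ncard {x | g x = i}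
      fin_cases i
      · change Set.ncard {x | f x = 0} = Set.ncard {x | g x = 0}
        omega
      · exact h1
      · exact h2
    exact ⟨(Finite.card_eq.1 hc).some⟩
  let e := fun i => (hall i).some
  refine ⟨(Equiv.sigmaFiberEquiv f).symm.trans
    ((Equiv.sigmaCongrRight fun i => e i).trans (Equiv.sigmaFiberEquiv g)), ?_⟩
  intro x
  exact (e (f x) ⟨x, rfl⟩).2

open Classical in
/-- colouring of S induced by A -/
noncomputable def colr {n : ℕ} (A : Set (SIdx n)) (x : IndexSetS n) : Fin 3 :=
  if x.1 ∈ A then 1 else if -x.1 ∈ A then 2 else 0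

theorem exists_WP {n : ℕ} (A A' : Set (SIdx n)) (hA : ∀ x ∈ A, -x ∉ A) (hA' : ∀ x ∈ A', -x ∉ A')
    (hc : A.ncard = A'.ncard)
    (hS : (A ∩ IndexSetS n).ncard = (A' ∩ IndexSetS n).ncard) :
    ∃ h : Equiv.Perm (SIdx n), InWP h ∧ ∀ x, h x ∈ A' ↔ x ∈ A := by
  have c1 : ∀ (A : Set (SIdx n)) (x : IndexSetS n), colr A x = 1 ↔ x.1 ∈ A := by
    intro A x
    unfold colr
    split_ifs with h1 h2 <;> simp [h1]
  have c2 : ∀ (A : Set (SIdx n)), (∀ x ∈ A, -x ∉ A) → ∀ (x : IndexSetS n),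
      colr A x = 2 ↔ -x.1 ∈ A := by
    intro A hA x
    unfold colr
    split_ifs with h1 h2
    · simp [hA _ h1]
    · simp [h2]
    · simp [h2]
  have n1 : ∀ (A : Set (SIdx n)), Set.ncard {x | colr A x = 1} = (A ∩ IndexSetS n).ncard := by
    intro A
    rw [← Set.ncard_image_of_injective {x | colr A x = 1} Subtype.val_injective]
    congr 1
    ext x
    simp only [c1, Set.mem_image, Set.mem_ofPred_eq, Set.mem_inter_iff]
    constructor
    · rintro ⟨y, hy, rfl⟩; exact ⟨hy, y.2⟩
    · rintro ⟨h1, h2⟩; exact ⟨⟨x, h2⟩, h1, rfl⟩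
  have n2 : ∀ (A : Set (SIdx n)), (∀ x ∈ A, -x ∉ A) →
      Set.ncard {x | colr A x = 2} = (A \ IndexSetS n).ncard := by
    intro A hA
    have hinj : Function.Injective (fun y : IndexSetS n => -y.1) := by
      intro a b hab
      have := congrArg (fun z : SIdx n => -z) hab
      simp only [sidx_neg_neg] at this
      exact Subtype.ext this
    rw [← Set.ncard_image_of_injective {x | colr A x = 2} hinj]
    congr 1
    ext x
    simp only [c2 A hA, Set.mem_image, Set.mem_ofPred_eq, Set.mem_sdiff]
    constructor
    · rintro ⟨y, hy, rfl⟩; exact ⟨hy, by rw [neg_mem_S]; simp⟩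
    · rintro ⟨h1, h2⟩
      exact ⟨⟨-x, (neg_mem_S x).2 h2⟩, by simpa [sidx_neg_neg] using h1, sidx_neg_neg x⟩
  have d1 := Set.ncard_inter_add_ncard_sdiff_eq_ncard A (IndexSetS n) (Set.toFinite _)
  have d2 := Set.ncard_inter_add_ncard_sdiff_eq_ncard A' (IndexSetS n) (Set.toFinite _)
  obtain ⟨σ, hσ⟩ := exists_equiv_color (colr A) (colr A') (by rw [n1, n1, hS])
    (by rw [n2 A hA, n2 A' hA']; omega)
  refine ⟨extP σ, extP_InWP σ, ?_⟩
  intro x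
  rcases S_cases x with ⟨y, rfl⟩ | ⟨y, rfl⟩
  · rw [extP_pos, ← c1, ← c1, hσ]
  · rw [extP_neg, ← c2 A hA, ← c2 A' hA', hσ]

theorem image_isotropic {n : ℕ} (m : ℕ) {w : Equiv.Perm (SIdx n)} (hw : IsSignedPerm w) :
    ∀ x ∈ ⇑w '' {x : SIdx n | 0 < x.1 ∧ x.1 ≤ (m : ℤ)},
      -x ∉ ⇑w '' {x : SIdx n | 0 < x.1 ∧ x.1 ≤ (m : ℤ)} := by
  rintro _ ⟨y, hy, rfl⟩ ⟨z, hz, hzy⟩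
  rw [← hw] at hzy
  have h := congrArg Subtype.val (w.injective hzy)
  rw [sidx_neg_val] at h
  have h1 := hy.1
  have h2 := hz.1
  omega

theorem ncard_Ioc {n d : ℕ} (hd : d ≤ n) :
    Set.ncard {x : SIdx n | 0 < x.1 ∧ x.1 ≤ (d : ℤ)} = d := by
  have hinj : Function.Injective (fun x : SIdx n => x.1) := Subtype.val_injective
  rw [← Set.ncard_image_of_injective _ hinj]
  have : (fun x : SIdx n => x.1) '' {x : SIdx n | 0 < x.1 ∧ x.1 ≤ (d : ℤ)} =
      ((Finset.Ioc (0 : ℤ) d : Finset ℤ) : Set ℤ) := by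
    ext z
    simp only [Set.mem_image, Set.mem_ofPred_eq, Finset.coe_Ioc, Set.mem_Ioc]
    constructor
    · rintro ⟨y, hy, rfl⟩; exact hy
    · intro h
      exact ⟨⟨z, by omega, by omega⟩, h, rfl⟩
  rw [this, Set.ncard_coe_finset]
  simp

theorem PP_flip_n {n : ℕ} (hn : 0 < n) : PP (flipP (n := n) {n}) = -1 := by
  rw [PP_eq_pow]
  let nn : SIdx n := ⟨(n : ℤ), by omega, by simp⟩
  have : {x : SIdx n | 0 < x.1 ∧ (flipP {n} x).1 < 0} = {nn} := by
    ext x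
    have h := sidx_prop x
    have h1 := flipP_val {n} x
    simp only [Set.mem_singleton_iff] at h1
    simp only [Set.mem_ofPred_eq, Set.mem_singleton_iff]
    constructor
    · intro h2
      apply sidx_ext
      change x.1 = n
      omega
    · intro h2
      have h3 : x.1 = n := congrArg Subtype.val h2
      omega
  rw [this, Set.ncard_singleton]; rfl

theorem interCount_of {n m d : ℕ} (hd : d ≤ m) (hmn : m < n) (w : Equiv.Perm (SIdx n))
    (hw : ∀ x : SIdx n, 0 < x.1 → x.1 ≤ m → w x = flipP (Set.Ioc d m) x) :
    interCount m w = d := by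
  unfold interCount
  refine Eq.trans ?_ (ncard_Ioc (n := n) (d := d) (by omega))
  congr 1
  ext x
  have hx := sidx_prop x
  simp only [Set.mem_inter_iff, Set.mem_image, Set.mem_ofPred_eq, IndexSetS]
  constructor
  · rintro ⟨⟨y, hy, rfl⟩, h2⟩
    rw [hw y hy.1 hy.2] at h2 hx ⊢
    have h1 := flipP_val (Set.Ioc d m) y
    simp only [Set.mem_Ioc] at h1
    have hy' := hy
    omega
  · intro h
    refine ⟨⟨x, by omega, ?_⟩, by omega⟩
    rw [hw x (by omega) (by omega)]
    apply sidx_ext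
    have h1 := flipP_val (Set.Ioc d m) x
    simp only [Set.mem_Ioc] at h1
    omega

/-- For `n ≥ 3` and `1 ≤ m < n−1`, two elements of `D_n` lie in the same `(W_P, W_Q)`
double coset iff `#(w({1,…,m}) ∩ S)` agree; the double cosets are exactly the `m+1`
sets `E_d`, `0 ≤ d ≤ m` (each of which is nonempty). -/
theorem stmt_12 (n m : ℕ) (hn : 3 ≤ n) (hm1 : 1 ≤ m) (hmn : m < n - 1) :
    (∀ w w' : Equiv.Perm (SIdx n), IsEvenSignedPerm w → IsEvenSignedPerm w' →
      (SameDC m w w' ↔ interCount m w = interCount m w')) ∧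
    (∀ d : ℕ, d ≤ m → ∃ w : Equiv.Perm (SIdx n),
      IsEvenSignedPerm w ∧ interCount m w = d) := by
  constructor
  · intro w w' hw hw'
    constructor
    · rintro ⟨h, k, hh, hk, rfl⟩
      unfold interCount
      have e1 : ⇑(h * w * k) '' {x : SIdx n | 0 < x.1 ∧ x.1 ≤ (m : ℤ)} =
          ⇑h '' (⇑w '' {x : SIdx n | 0 < x.1 ∧ x.1 ≤ (m : ℤ)}) := by
        conv_rhs => rw [← hk.2]
        simp only [Set.image_image]
        rfl
      rw [e1]
      conv_rhs => rw [← hh.2]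
      rw [← Set.image_inter h.injective, Set.ncard_image_of_injective _ h.injective]
    · intro hc
      obtain ⟨h, hWP, hh⟩ := exists_WP _ _ (image_isotropic m hw.1) (image_isotropic m hw'.1)
        (by rw [Set.ncard_image_of_injective _ w.injective,
          Set.ncard_image_of_injective _ w'.injective]) hc
      refine ⟨h, w⁻¹ * (h⁻¹ * w'), hWP,
        ⟨even_mul (even_inv hw) (even_mul (even_inv hWP.1) hw'), ?_⟩, by group⟩
      ext x
      constructor
      · rintro ⟨y, hy, rfl⟩
        have h1 := (hh (h⁻¹ (w' y))).1 ⟨y, hy, by simp⟩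
        obtain ⟨z, hz, hzy⟩ := h1
        simp only [Equiv.Perm.mul_apply]
        rw [← hzy]
        simpa using hz
      · intro hx
        obtain ⟨z, hz, hzy⟩ := (hh (w x)).2 ⟨x, hx, rfl⟩
        refine ⟨z, hz, ?_⟩
        simp only [Equiv.Perm.mul_apply]
        rw [hzy]; simp
  · intro d hd
    have hF := flipP_signed (n := n) (Set.Ioc d m)
    have hN := flipP_signed (n := n) {n}
    rcases PP_sq (flipP (n := n) (Set.Ioc d m)) with h1 | h1
    · exact ⟨flipP (Set.Ioc d m), (even_iff _).2 ⟨hF, h1⟩,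
        interCount_of hd (by omega) _ (fun _ _ _ => rfl)⟩
    · refine ⟨flipP (Set.Ioc d m) * flipP {n}, (even_iff _).2 ⟨signed_mul hF hN, ?_⟩,
        interCount_of hd (by omega) _ ?_⟩
      · rw [PP_mul hF hN, h1, PP_flip_n (by omega)]; rfl
      · intro x hx hxm
        simp only [Equiv.Perm.mul_apply]
        congr 1
        apply sidx_ext
        have h2 := flipP_val {n} x
        simp only [Set.mem_singleton_iff] at h2
        omega
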